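/- Let R be a commutative ring and let C be a chain complex of R-modules whose total homology H_*(C) is a finitely generated R-module. Then there exist finitely many ideals J_1, …, J_m of R such that Loc(C) = Loc(R/J_1, …, R/J_m) in D(R). -/

import Mathlib

/-!
Induct on the degrees in which `C` has homology and on the number of generators of the top homology
`H_i(C)`. Replace `C` by a quasi-isomorphic complex `P` of projectives vanishing above degree `i`. A
surjection of `H_i(C)` onto a cyclic module `R/J` is induced by a chain map `φ : P ⟶ (R/J)[-i]`, and
the kernel `F` of `φ` has the homology of `C` except that its top homology needs fewer generators.

It remains to see that `R/J` is in `Loc(C)`, since then `Loc(C) = Loc(R/J, F)`. Lifting the unit of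
the algebra `R/J` through the degree `i` part of `φ` shows that `(R/J)[-i]` is a retract of
`P ⊗ R/J`. Localizing subcategories are closed under retracts by Eilenberg's swindle, so it suffices
that `P ⊗ M` is in `Loc(P)` for all `M`. A free resolution of `M` exhibits `P ⊗ M` as the start of a
sequence `P ⊗ M ⟶ (P ⊗ M₁)[1] ⟶ (P ⊗ M₂)[2] ⟶ ⋯` whose transition maps have cones that are sums of
shifts of `P`. As `P` is bounded above, the homotopy colimit of this sequence vanishes; comparing it
with the constant sequence puts `P ⊗ M` in `Loc(P)`.
-/

open CategoryTheory CategoryTheory.Limits CategoryTheory.Pretriangulated ZeroObject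

universe w w' v u

section TriangulatedDefs

variable {T : Type u} [Category.{v} T] [Preadditive T] [HasZeroObject T]
  [HasShift T ℤ] [∀ n : ℤ, (shiftFunctor T n).Additive] [Pretriangulated T]

/-- A localizing subcategory of a (pre)triangulated category, encoded as a set of
objects: it is closed under isomorphisms, contains the zero object, is stable
under shifts, closed under cones of distinguished triangles (hence a full
triangulated subcategory), and closed under arbitrary small coproducts
(phrased via colimit cofans, so that no global existence of coproducts
is needed). -/
structure IsLocalizingSub (S : Set T) : Prop where
  zero_mem : (0 : T) ∈ S
  mem_of_iso : ∀ {x y : T}, (x ≅ y) → x ∈ S → y ∈ S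
  shift_mem : ∀ (n : ℤ) {x : T}, x ∈ S → x⟦n⟧ ∈ S
  cone_mem : ∀ (Tr : Triangle T), Tr ∈ distinguishedTriangles →
    Tr.obj₁ ∈ S → Tr.obj₂ ∈ S → Tr.obj₃ ∈ S
  coprod_mem : ∀ {ι : Type w} (f : ι → T) (c : Cofan f), IsColimit c →
    (∀ i, f i ∈ S) → c.pt ∈ S

/-- A colocalizing subcategory: as `IsLocalizingSub` but with products instead
of coproducts. -/
structure IsColocalizingSub (S : Set T) : Prop where
  zero_mem : (0 : T) ∈ S
  mem_of_iso : ∀ {x y : T}, (x ≅ y) → x ∈ S → y ∈ S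
  shift_mem : ∀ (n : ℤ) {x : T}, x ∈ S → x⟦n⟧ ∈ S
  cone_mem : ∀ (Tr : Triangle T), Tr ∈ distinguishedTriangles →
    Tr.obj₁ ∈ S → Tr.obj₂ ∈ S → Tr.obj₃ ∈ S
  prod_mem : ∀ {ι : Type w} (f : ι → T) (c : Fan f), IsLimit c →
    (∀ i, f i ∈ S) → c.pt ∈ S

/-- `Loc S`: the smallest localizing subcategory containing the set of
objects `S` (the intersection of all localizing subcategories containing it). -/
def Loc (S : Set T) : Set T :=
  ⋂₀ {L : Set T | IsLocalizingSub.{w} L ∧ S ⊆ L}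

/-- The right orthogonal of a set of objects. -/
def rightOrth (C : Set T) : Set T :=
  {x : T | ∀ ⦃c : T⦄, c ∈ C → ∀ (g : c ⟶ x), g = 0}

end TriangulatedDefs

section CompactDefs

variable {T : Type u} [Category.{v} T] [Preadditive T]

/-- The canonical comparison map `⨁ᵢ Hom(x, fᵢ) →+ Hom(x, ∐ f)` associated to a
cofan `c` on a family `f`. -/
noncomputable def cofanHomComparison {ι : Type w} (x : T) (f : ι → T) (c : Cofan f) :
    (Π₀ i, (x ⟶ f i)) →+ (x ⟶ c.pt) :=
  letI := Classical.decEq ι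
  DFinsupp.sumAddHom (fun i => AddMonoidHom.mk' (fun φ => φ ≫ c.inj i)
    (fun φ ψ => Preadditive.add_comp _ _ _ φ ψ (c.inj i)))

/-- An object `x` is compact if `Hom(x, -)` commutes with arbitrary small
coproducts, i.e. for every colimit cofan on a family `f`, the canonical map
`⨁ᵢ Hom(x, fᵢ) → Hom(x, ∐ f)` is bijective. -/
def IsCompactObj (x : T) : Prop :=
  ∀ ⦃ι : Type w⦄ (f : ι → T) (c : Cofan f), IsColimit c →
    Function.Bijective (cofanHomComparison x f c)

end CompactDefs

section DR

variable (R : Type u) [CommRing R] [HasDerivedCategory.{w'} (ModuleCat.{u} R)]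

/-- The `R`-module `M`, regarded as an object of the derived category `D(R)`,
as a complex concentrated in degree `0`. -/
noncomputable def smod (M : ModuleCat.{u} R) : DerivedCategory (ModuleCat.{u} R) :=
  (DerivedCategory.singleFunctor (ModuleCat.{u} R) 0).obj M

end DR

section Triangulated

open Opposite Pretriangulated.Opposite

variable {T : Type u} [Category.{v} T] [Preadditive T] [HasZeroObject T] [HasShift T ℤ]
  [∀ n : ℤ, (shiftFunctor T n).Additive] [Pretriangulated T]
  (P : ObjectProperty T) [P.IsClosedUnderIsomorphisms]

lemma trW_sigmaMap {J : Type*} [HasCoproductsOfShape J T]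
    [P.IsClosedUnderColimitsOfShape (Discrete J)] {X Y : J → T} (f : ∀ j, X j ⟶ Y j)
    (hf : ∀ j, P.trW (f j)) : P.trW (Limits.Sigma.map f) := by
  choose Z g h hT hZ using hf
  have hop := unop_distinguished _ (productTriangle_distinguished _
    fun j ↦ op_distinguished _ (hT j))
  have hZ' := P.prop_of_iso (opCoproductIsoProduct Z).unop.symm (P.prop_colimit _ fun j ↦ hZ j.as)
  have ι_inv (A : J → T) (j : J) :
      Limits.Sigma.ι A j ≫ (opCoproductIsoProduct A).unop.inv = (Pi.π (op <| A ·) j).unop :=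
    Quiver.Hom.op_inj (opCoproductIsoProduct_inv_comp_ι A j)
  have comm : (opCoproductIsoProduct X).unop.inv ≫ (Limits.Pi.map fun j ↦ (f j).op).unop =
      Limits.Sigma.map f ≫ (opCoproductIsoProduct Y).unop.inv := by
    refine Limits.Sigma.hom_ext _ _ fun j ↦ ?_
    rw [reassoc_of% ι_inv, Limits.Sigma.ι_map_assoc, ι_inv]
    exact Quiver.Hom.op_inj (Limits.Pi.map_π (fun j ↦ (f j).op) j)
  exact (P.trW.arrow_mk_iso_iff (Arrow.isoMk (opCoproductIsoProduct X).unop.symm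
    (opCoproductIsoProduct Y).unop.symm comm)).2 (ObjectProperty.trW.mk P hop hZ')

lemma isStableUnderCoproductsOfShape_trW (J : Type*) [HasCoproductsOfShape J T]
    [P.IsClosedUnderColimitsOfShape (Discrete J)] :
    P.trW.IsStableUnderCoproductsOfShape J :=
  MorphismProperty.IsStableUnderCoproductsOfShape.mk _ _ fun _ _ _ _ f hf ↦ trW_sigmaMap P f hf

variable [P.IsTriangulated]

lemma trW_of_comp [IsTriangulated T] {X Y Z : T} {f : X ⟶ Y} {g : Y ⟶ Z} (hg : P.trW g)
    (hfg : P.trW (f ≫ g)) : P.trW f := by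
  obtain ⟨A, a, b, hA⟩ := distinguished_cocone_triangle f
  obtain ⟨B, c, d, hB, hPB⟩ := hg
  obtain ⟨C, e, k, hC, hPC⟩ := hfg
  exact ⟨A, a, b, hA, P.ext_of_isTriangulatedClosed₁ _
    (Triangulated.someOctahedron rfl hA hB hC).mem hPC hPB⟩

variable {P} in
lemma prop_X₃_of_splitting {S : ShortComplex T} (h : S.Splitting) (h₁ : P S.X₁) (h₂ : P S.X₂) :
    P S.X₃ :=
  P.ext_of_isTriangulatedClosed₃ _ (binaryBiproductTriangle_distinguished S.X₁ S.X₃) h₁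
    (P.prop_of_iso h.isoBinaryBiproduct h₂)

end Triangulated

section EilenbergSwindle

variable {A : Type*} [Category* A] [Preadditive A] {X Y : A} (h : Retract X Y)
  [HasCoproduct fun _ : ℕ ↦ Y]

/-- Eilenberg's swindle for a retract `X` of `Y`: the endomorphism of `∐ Y` that moves the summand
`X` of each copy of `Y` to the next copy and fixes the complementary summands, with cokernel `X`. -/
noncomputable def eilenbergSwindle : ShortComplex A :=
  .mk (X₁ := ∐ fun _ : ℕ ↦ Y) (X₂ := ∐ fun _ : ℕ ↦ Y) (X₃ := X)
    (Sigma.desc fun n ↦ h.r ≫ h.i ≫ Sigma.ι (fun _ ↦ Y) (n + 1) +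
      (𝟙 Y - h.r ≫ h.i) ≫ Sigma.ι (fun _ ↦ Y) n)
    (Sigma.desc fun n ↦ n.casesOn h.r 0) (by
      ext n
      cases n <;> simp [Preadditive.sub_comp])

/-- The splitting of the swindle, which also moves the summand `X` of each copy of `Y` back to the
previous copy. -/
noncomputable def eilenbergSwindleSplitting : (eilenbergSwindle h).Splitting where
  r := Sigma.desc fun n ↦ n.casesOn ((𝟙 Y - h.r ≫ h.i) ≫ Sigma.ι (fun _ ↦ Y) 0) fun n ↦
    h.r ≫ h.i ≫ Sigma.ι (fun _ ↦ Y) n + (𝟙 Y - h.r ≫ h.i) ≫ Sigma.ι (fun _ ↦ Y) (n + 1)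
  s := h.i ≫ Sigma.ι (fun _ ↦ Y) 0
  f_r := by
    dsimp [eilenbergSwindle]
    ext n
    cases n <;> simp [Preadditive.sub_comp]
  s_g := by simp [eilenbergSwindle]
  id := by
    change (_ + _ : (∐ fun _ : ℕ ↦ Y) ⟶ ∐ fun _ : ℕ ↦ Y) = 𝟙 _
    ext n
    cases n <;> simp [eilenbergSwindle, Preadditive.sub_comp, Preadditive.comp_sub]

end EilenbergSwindle

lemma isStableUnderRetracts_of_isTriangulated {T : Type u} [Category.{v} T] [Preadditive T]
    [HasZeroObject T] [HasShift T ℤ] [∀ n : ℤ, (shiftFunctor T n).Additive] [Pretriangulated T]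
    [HasCoproductsOfShape ℕ T] (P : ObjectProperty T) [P.IsTriangulated]
    [P.IsClosedUnderIsomorphisms] [P.IsClosedUnderColimitsOfShape (Discrete ℕ)] :
    P.IsStableUnderRetracts where
  of_retract h hY :=
    have hY := P.prop_colimit _ fun _ : Discrete ℕ ↦ hY
    prop_X₃_of_splitting (eilenbergSwindleSplitting h) hY hY

section EssSurj

variable {C D : Type*} [Category* C] [Category* D] (L : C ⥤ D) [L.EssSurj]

lemma preservesColimitsOfShape_discrete_of_essSurj {J : Type*} [HasCoproductsOfShape J C]
    (exists_desc : ∀ {X : J → C} {Y : C} (f : ∀ j, L.obj (X j) ⟶ L.obj Y),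
      ∃ g : L.obj (∐ X) ⟶ L.obj Y, ∀ j, L.map (Sigma.ι X j) ≫ g = f j)
    (hom_ext : ∀ {X : J → C} {Y : C} {f g : L.obj (∐ X) ⟶ L.obj Y},
      (∀ j, L.map (Sigma.ι X j) ≫ f = L.map (Sigma.ι X j) ≫ g) → f = g) :
    PreservesColimitsOfShape (Discrete J) L := by
  have (X : J → C) : PreservesColimit (Discrete.functor X) L := by
    refine preservesColimit_of_preserves_colimit_cocone (coproductIsCoproduct X)
      ((isColimitMapCoconeCofanMkEquiv L _ _).symm (.ofExistsUnique fun s ↦ ?_))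
    let e := L.objObjPreimageIso s.pt
    obtain ⟨g, hg⟩ := exists_desc fun j ↦ s.ι.app ⟨j⟩ ≫ e.inv
    refine ⟨g ≫ e.hom, fun ⟨j⟩ ↦ by simp [reassoc_of% hg], fun g' hg' ↦ ?_⟩
    rw [← cancel_mono e.inv]
    exact hom_ext fun j ↦ by simpa [hg] using hg' ⟨j⟩ =≫ e.inv
  exact preservesColimitsOfShape_of_discrete L

lemma hasCoproductsOfShape_of_essSurj (J : Type*) [HasCoproductsOfShape J C]
    [PreservesColimitsOfShape (Discrete J) L] : HasCoproductsOfShape J D where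
  has_colimit F :=
    hasColimit_of_iso (F := Discrete.functor (fun j ↦ L.objPreimage (F.obj ⟨j⟩)) ⋙ L)
      (Discrete.natIso fun _ ↦ (L.objObjPreimageIso _).symm)

end EssSurj

section Localization

open Localization

variable {C D : Type*} [Category* C] [Category* D] (L : C ⥤ D) (W : MorphismProperty C)
  [L.IsLocalization W] [W.HasRightCalculusOfFractions] {J : Type*}
  [HasCoproductsOfShape J C] [W.IsStableUnderCoproductsOfShape J]

include W in
lemma exists_desc_of_isLocalization {X : J → C} {Y : C} (f : ∀ j, L.obj (X j) ⟶ L.obj Y) :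
    ∃ g : L.obj (∐ X) ⟶ L.obj Y, ∀ j, L.map (Sigma.ι X j) ≫ g = f j := by
  choose φ hφ using fun j ↦ exists_rightFraction L W (f j)
  have hW : W (Limits.Sigma.map fun j ↦ (φ j).s) :=
    W.colimitsOfShape_le _ (W.colimitsOfShape_colimMap _ fun j ↦ (φ j.as).hs)
  have := inverts L W _ hW
  have (j : J) := inverts L W _ (φ j).hs
  refine ⟨inv (L.map (Limits.Sigma.map fun j ↦ (φ j).s)) ≫ L.map (Sigma.desc fun j ↦ (φ j).f),
    fun j ↦ ?_⟩
  rw [hφ, ← cancel_epi (L.map (φ j).s), ← L.map_comp_assoc,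
    ← Limits.Sigma.ι_map (fun j ↦ (φ j).s), L.map_comp_assoc, IsIso.hom_inv_id_assoc,
    ← L.map_comp, Sigma.ι_desc, MorphismProperty.RightFraction.map_s_comp_map]

variable [W.HasLeftCalculusOfFractions]

include W in
lemma hom_ext_of_isLocalization {X : J → C} {Y : C} {f g : L.obj (∐ X) ⟶ L.obj Y}
    (h : ∀ j, L.map (Sigma.ι X j) ≫ f = L.map (Sigma.ι X j) ≫ g) : f = g := by
  obtain ⟨φ, rfl, rfl⟩ := exists_leftFraction₂ L W f g
  have := inverts L W _ φ.hs
  have hL (j : J) : L.map (Sigma.ι X j ≫ φ.f) = L.map (Sigma.ι X j ≫ φ.f') := by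
    rw [L.map_comp, L.map_comp, ← cancel_mono (inv (L.map φ.s))]
    simpa [MorphismProperty.LeftFraction.map] using h j
  choose Z s hs hZ using fun j ↦ (W.map_eq_iff_precomp L _ _).1 (hL j)
  have hW : W (Limits.Sigma.map s) :=
    W.colimitsOfShape_le _ (W.colimitsOfShape_colimMap _ fun j ↦ hs j.as)
  have : L.map φ.f = L.map φ.f' :=
    (W.map_eq_iff_precomp L _ _).2 ⟨_, _, hW, Sigma.hom_ext _ _ fun j ↦ by simpa using hZ j⟩
  simp [MorphismProperty.LeftFraction.map, this]

include W in
lemma preservesColimitsOfShape_discrete_of_isLocalization :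
    PreservesColimitsOfShape (Discrete J) L :=
  have := essSurj L W
  preservesColimitsOfShape_discrete_of_essSurj L (exists_desc_of_isLocalization L W)
    (hom_ext_of_isLocalization L W)

end Localization

section Coproducts

variable {A : Type*} [Category* A] {ι : Type*} {c : ComplexShape ι} {J : Type*}

/-- The degree `n` part of a coproduct of complexes, as a coproduct. -/
noncomputable def isColimitCofanSigmaX [HasZeroMorphisms A] [HasCoproductsOfShape J A]
    (K : J → HomologicalComplex A c) (n : ι) :
    IsColimit (Cofan.mk (f := fun j ↦ (K j).X n) ((∐ K).X n) fun j ↦ (Sigma.ι K j).f n) :=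
  isColimitCofanMkObjOfIsColimit (HomologicalComplex.eval _ _ n) K (Sigma.ι K)
    (coproductIsCoproduct K)

lemma nonempty_homotopy_zero_of_sigma [Preadditive A] [HasCoproductsOfShape J A]
    {K : J → HomologicalComplex A c} {L : HomologicalComplex A c} {f : (∐ K) ⟶ L}
    (h : ∀ j, Homotopy (Sigma.ι K j ≫ f) 0) : Nonempty (Homotopy f 0) := by
  let s (n m : ι) : (∐ K).X n ⟶ L.X m :=
    Cofan.IsColimit.desc (isColimitCofanSigmaX K n) fun j ↦ (h j).hom n m
  have ι_s (j : J) (n m : ι) : (Sigma.ι K j).f n ≫ s n m = (h j).hom n m :=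
    Cofan.IsColimit.fac (isColimitCofanSigmaX K n) _ j
  refine ⟨⟨s, fun n m hnm ↦ ?_, fun n ↦ ?_⟩⟩ <;>
    refine Cofan.IsColimit.hom_ext (isColimitCofanSigmaX K n) _ _ fun j ↦ ?_
  · exact (ι_s j n m).trans (((h j).zero n m hnm).trans comp_zero.symm)
  · have hs : (h j).hom = fun n m ↦ (Sigma.ι K j).f n ≫ s n m := by ext; rw [ι_s]
    have := (h j).comm n
    rw [hs, dNext_comp_left, prevD_comp_left] at this
    simpa [-dNext_eq_dFrom_fromNext, -prevD_eq_toPrev_dTo] using this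

variable [Abelian A] [HasCoproductsOfShape J A] [HasExactColimitsOfShape (Discrete J) A]

instance epi_sigmaDesc_cyclesMap (K : J → HomologicalComplex A c) (n : ι) :
    Epi (Sigma.desc fun j ↦ HomologicalComplex.cyclesMap (Sigma.ι K j) n) := by
  let S : ShortComplex (Discrete J ⥤ A) :=
    { X₁ := Discrete.functor fun j ↦ (K j).cycles n
      X₂ := Discrete.functor fun j ↦ (K j).X n
      X₃ := Discrete.functor fun j ↦ (K j).X (c.next n)
      f := Discrete.natTrans fun j ↦ (K j.as).iCycles n
      g := Discrete.natTrans fun j ↦ (K j.as).d n _ }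
  have (j : Discrete J) : Mono (S.f.app j) := inferInstanceAs (Mono ((K j.as).iCycles n))
  have : Mono S.f := NatTrans.mono_of_mono_app S.f
  have hS : S.Exact := S.exact_of_f_is_kernel (KernelFork.IsLimit.ofι' _ _ fun k hk ↦
    ⟨Discrete.natTrans fun j ↦ (K j.as).liftCycles (k.app j) _ rfl (congr_app hk j),
      NatTrans.ext (funext fun j ↦ (K j.as).liftCycles_i (k.app j) _ rfl (congr_app hk j))⟩)
  set φ := Sigma.desc fun j ↦ HomologicalComplex.cyclesMap (Sigma.ι K j) n with hφ
  have exact : (ShortComplex.mk (φ ≫ (∐ K).iCycles n) ((∐ K).d n (c.next n)) (by simp)).Exact :=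
    colim.exact_mapShortComplex hS (coproductIsCoproduct _) (isColimitCofanSigmaX K n)
      (isColimitCofanSigmaX K _) _ _ (fun j ↦ by simp [S, hφ]) (fun j ↦ by simp [S])
  refine (epi_iff_surjective_up_to_refinements φ).2 fun W y ↦ ?_
  obtain ⟨W', π, hπ, x, hx⟩ := exact.exact_up_to_refinements (y ≫ (∐ K).iCycles n) (by simp)
  exact ⟨W', π, hπ, x, by simpa [← cancel_mono ((∐ K).iCycles n)] using hx⟩

lemma sigma_homology_hom_ext {K : J → HomologicalComplex A c} {n : ι} {Z : A}
    {f g : (∐ K).homology n ⟶ Z} (h : ∀ j, HomologicalComplex.homologyMap (Sigma.ι K j) n ≫ f =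
      HomologicalComplex.homologyMap (Sigma.ι K j) n ≫ g) : f = g := by
  rw [← cancel_epi ((∐ K).homologyπ n),
    ← cancel_epi (Sigma.desc fun j ↦ HomologicalComplex.cyclesMap (Sigma.ι K j) n)]
  refine Sigma.hom_ext _ _ fun j ↦ ?_
  simpa using (K j).homologyπ n ≫= h j

end Coproducts

section DerivedCoproducts

variable {A : Type*} [Category* A] {J : Type*}

instance preservesCoproducts_quotient [Preadditive A] [HasCoproductsOfShape J A]
    {ι : Type*} (c : ComplexShape ι) :
    PreservesColimitsOfShape (Discrete J) (HomotopyCategory.quotient A c) := by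
  refine preservesColimitsOfShape_discrete_of_essSurj _ (fun {K L} f ↦ ?_) (fun {K L f g} h ↦ ?_)
  · choose f hf using fun j ↦ (HomotopyCategory.quotient A c).map_surjective (f j)
    exact ⟨(HomotopyCategory.quotient A c).map (Sigma.desc f), fun j ↦ by
      rw [← Functor.map_comp, Sigma.ι_desc, hf]⟩
  · obtain ⟨φ, hφ⟩ := (HomotopyCategory.quotient A c).map_surjective (f - g)
    have h (j : J) : (HomotopyCategory.quotient A c).map (Sigma.ι K j ≫ φ) = 0 := by
      rw [Functor.map_comp, hφ, Preadditive.comp_sub, h, sub_self]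
    rw [← sub_eq_zero, ← hφ, HomotopyCategory.quotient_map_eq_zero_iff]
    exact nonempty_homotopy_zero_of_sigma fun j ↦
      ((HomotopyCategory.quotient_map_eq_zero_iff _).1 (h j)).some

variable [Abelian A] [HasCoproductsOfShape J A] [HasExactColimitsOfShape (Discrete J) A]

lemma acyclic_sigma {ι : Type*} {c : ComplexShape ι} {K : J → HomologicalComplex A c}
    (hK : ∀ j, (K j).Acyclic) : (∐ K).Acyclic := fun n ↦ by
  rw [HomologicalComplex.exactAt_iff_isZero_homology, IsZero.iff_id_eq_zero]
  exact sigma_homology_hom_ext fun j ↦ (hK j n).isZero_homology.eq_of_src _ _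

instance isClosedUnderColimitsOfShape_subcategoryAcyclic :
    (HomotopyCategory.subcategoryAcyclic A).IsClosedUnderColimitsOfShape (Discrete J) :=
  .mk' <| by
    rintro _ ⟨F, hF⟩
    have e : F ≅ Discrete.functor (fun j ↦ (F.obj ⟨j⟩).as) ⋙ HomotopyCategory.quotient A (.up ℤ) :=
      Discrete.natIso fun _ ↦ Iso.refl _
    rw [(HomotopyCategory.subcategoryAcyclic A).prop_iff_of_iso
        (HasColimit.isoOfNatIso e ≪≫ (preservesColimitIso _ _).symm),
      HomotopyCategory.quotient_obj_mem_subcategoryAcyclic_iff_acyclic]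
    exact acyclic_sigma fun j ↦
      (HomotopyCategory.quotient_obj_mem_subcategoryAcyclic_iff_acyclic _).1 (hF ⟨j⟩)

variable (J) in
lemma isStableUnderCoproductsOfShape_quasiIso :
    (HomotopyCategory.quasiIso A (.up ℤ)).IsStableUnderCoproductsOfShape J := by
  rw [HomotopyCategory.quasiIso_eq_trW_subcategoryAcyclic]
  have := hasCoproductsOfShape_of_essSurj (HomotopyCategory.quotient A (.up ℤ)) J
  exact isStableUnderCoproductsOfShape_trW _ J

variable [HasDerivedCategory.{w'} A]

instance preservesCoproducts_Q :
    PreservesColimitsOfShape (Discrete J) (DerivedCategory.Q (C := A)) := by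
  have := hasCoproductsOfShape_of_essSurj (HomotopyCategory.quotient A (.up ℤ)) J
  have := isStableUnderCoproductsOfShape_quasiIso (A := A) J
  have := preservesColimitsOfShape_discrete_of_isLocalization (J := J)
    (DerivedCategory.Qh (C := A)) (HomotopyCategory.quasiIso A (.up ℤ))
  exact preservesColimitsOfShape_of_natIso (DerivedCategory.quotientCompQhIso A)

instance hasCoproductsOfShape_derivedCategory : HasCoproductsOfShape J (DerivedCategory A) :=
  hasCoproductsOfShape_of_essSurj DerivedCategory.Q J

end DerivedCoproducts

section SequenceShift

variable {C : Type*} [Category* C]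

/-- The endomorphism of the coproduct of a sequence induced by its transition maps; the cokernel of
`𝟙 - sequenceShift X` is the colimit of `X`, and its cone is the homotopy colimit. -/
noncomputable def sequenceShift (X : ℕ ⥤ C) [HasCoproduct X.obj] : ∐ X.obj ⟶ ∐ X.obj :=
  Limits.Sigma.desc fun k ↦ X.map (homOfLE k.le_succ) ≫ Limits.Sigma.ι X.obj (k + 1)

lemma ι_sequenceShift (X : ℕ ⥤ C) [HasCoproduct X.obj] (k : ℕ) :
    Limits.Sigma.ι X.obj k ≫ sequenceShift X =
      X.map (homOfLE k.le_succ) ≫ Limits.Sigma.ι X.obj (k + 1) :=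
  Limits.Sigma.ι_desc _ _

lemma map_ι_sequenceShift_pow {D : Type*} [Category* D] (F : C ⥤ D) (X : ℕ ⥤ C)
    [HasCoproduct X.obj] (k m : ℕ) :
    F.map (Limits.Sigma.ι X.obj k) ≫ (End.of (F.map (sequenceShift X)) ^ m).asHom =
      F.map (X.map (homOfLE (k.le_add_right m)) ≫ Limits.Sigma.ι X.obj (k + m)) := by
  induction m with
  | zero => simp [End.one_def, End.asHom]
  | succ m ih =>
    have : X.map (homOfLE (k.le_add_right (m + 1))) =
      X.map (homOfLE (k.le_add_right m)) ≫ X.map (homOfLE (k + m).le_succ) := X.map_comp _ _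
    rw [pow_succ', End.mul_def]
    change _ ≫ (End.of (F.map (sequenceShift X)) ^ m).asHom ≫ F.map (sequenceShift X) = _
    rw [reassoc_of% ih, ← F.map_comp, Category.assoc, ι_sequenceShift, this, Category.assoc]
    rfl

lemma sequenceShift_naturality {X Y : ℕ ⥤ C} [HasCoproduct X.obj] [HasCoproduct Y.obj]
    (f : X ⟶ Y) : sequenceShift X ≫ Limits.Sigma.map f.app =
      Limits.Sigma.map f.app ≫ sequenceShift Y := by
  ext k
  simp [ι_sequenceShift, reassoc_of% ι_sequenceShift X]

lemma map_homOfLE_zero_le_mem (W : MorphismProperty C) [W.IsMultiplicative] {X : ℕ ⥤ C}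
    (hX : ∀ k : ℕ, W (X.map (homOfLE k.le_succ))) (k : ℕ) : W (X.map (homOfLE k.zero_le)) := by
  induction k with
  | zero => exact (X.map_id 0).symm ▸ W.id_mem _
  | succ k ih =>
    have : X.map (homOfLE (k + 1).zero_le) =
      X.map (homOfLE k.zero_le) ≫ X.map (homOfLE k.le_succ) := X.map_comp _ _
    exact this ▸ W.comp_mem _ _ ih (hX k)

end SequenceShift

section Telescope

variable {T : Type*} [Category* T] [Preadditive T] [HasZeroObject T] [HasShift T ℤ]
  [∀ n : ℤ, (shiftFunctor T n).Additive] [Pretriangulated T] [HasCoproductsOfShape ℕ T]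

-- The codiagonal of a constant sequence kills `1 - sequenceShift`, so it splits off the cone.
lemma prop_of_trW_id_sub_sequenceShift (P : ObjectProperty T) [P.IsTriangulated]
    [P.IsClosedUnderIsomorphisms] [P.IsClosedUnderColimitsOfShape (Discrete ℕ)] {Y : T}
    (hY : P.trW (𝟙 _ - sequenceShift ((Functor.const ℕ).obj Y))) : P Y := by
  let X : ℕ ⥤ T := (Functor.const ℕ).obj Y
  let codiagonal : ∐ X.obj ⟶ Y := Limits.Sigma.desc fun _ ↦ 𝟙 Y
  have ι_codiagonal (k : ℕ) : Limits.Sigma.ι X.obj k ≫ codiagonal = 𝟙 Y :=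
    Limits.Sigma.ι_desc _ _
  have sub_comp_codiagonal : (𝟙 _ - sequenceShift X) ≫ codiagonal = 0 := by
    refine Limits.Sigma.hom_ext _ _ fun k ↦ ?_
    rw [Preadditive.sub_comp, Preadditive.comp_sub, Category.id_comp, reassoc_of% ι_sequenceShift X,
      ι_codiagonal, ι_codiagonal, comp_zero, sub_eq_zero]
    exact (Category.id_comp _).symm
  obtain ⟨Z, g, h, hT, hZ⟩ := hY
  obtain ⟨r, hr⟩ : ∃ r : Z ⟶ Y, codiagonal = g ≫ r :=
    Triangle.yoneda_exact₂ _ hT _ sub_comp_codiagonal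
  have := isStableUnderRetracts_of_isTriangulated P
  exact P.prop_of_retract
    { i := Limits.Sigma.ι X.obj 0 ≫ g
      r := r
      retract := by rw [Category.assoc, ← hr, ι_codiagonal] } hZ

open DerivedCategory

variable {C : Type*} [Category* C] [Abelian C] [HasDerivedCategory.{w'} C]

lemma sigma_homologyFunctor_hom_ext {J : Type*} [HasCoproductsOfShape J C]
    [HasExactColimitsOfShape (Discrete J) C] {X : J → DerivedCategory C} {n : ℤ} {Z : C}
    {f g : (homologyFunctor C n).obj (∐ X) ⟶ Z}
    (h : ∀ j, (homologyFunctor C n).map (Limits.Sigma.ι X j) ≫ f =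
      (homologyFunctor C n).map (Limits.Sigma.ι X j) ≫ g) : f = g := by
  let K (j : J) := Q.objPreimage (X j)
  let e (j : J) : Q.obj (K j) ≅ X j := Q.objObjPreimageIso _
  obtain ⟨φ, _, ι_φ⟩ : ∃ φ : Q.obj (∐ K) ⟶ ∐ X, IsIso φ ∧
      ∀ j, Q.map (Limits.Sigma.ι K j) ≫ φ = (e j).hom ≫ Limits.Sigma.ι X j :=
    ⟨inv (sigmaComparison Q K) ≫ Limits.Sigma.map fun j ↦ (e j).hom, inferInstance, fun j ↦ by
      simp [← ι_comp_sigmaComparison_assoc]⟩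
  have naturality (j : J) (f : (homologyFunctor C n).obj (∐ X) ⟶ Z) :
      HomologicalComplex.homologyMap (Limits.Sigma.ι K j) n ≫
        (homologyFunctorFactors C n).inv.app (∐ K) ≫ (homologyFunctor C n).map φ ≫ f =
      (homologyFunctorFactors C n).inv.app (K j) ≫ (homologyFunctor C n).map (e j).hom ≫
        (homologyFunctor C n).map (Limits.Sigma.ι X j) ≫ f := by
    rw [← Functor.map_comp_assoc, ← ι_φ, Functor.map_comp_assoc]
    exact (homologyFunctorFactors C n).inv.naturality_assoc (Limits.Sigma.ι K j)
      ((homologyFunctor C n).map φ ≫ f)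
  rw [← cancel_epi ((homologyFunctor C n).map φ),
    ← cancel_epi ((homologyFunctorFactors C n).inv.app (∐ K))]
  exact sigma_homology_hom_ext fun j ↦
    ((naturality j f).trans (by rw [h])).trans (naturality j g).symm

variable [HasCoproductsOfShape ℕ C] [HasExactColimitsOfShape (Discrete ℕ) C]
  {X : ℕ ⥤ DerivedCategory C}
  (hX : ∀ n, ∃ k₀, ∀ k ≥ k₀, IsZero ((homologyFunctor C n).obj (X.obj k)))

include hX in
lemma isIso_id_sub_sequenceShift : IsIso (𝟙 _ - sequenceShift X) := by
  rw [isIso_iff]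
  intro n
  obtain ⟨k₀, hk₀⟩ := hX n
  have hs : IsNilpotent (End.of ((homologyFunctor C n).map (sequenceShift X))) :=
    ⟨k₀, sigma_homologyFunctor_hom_ext fun k ↦ (map_ι_sequenceShift_pow _ X k k₀).trans <| by
      rw [Functor.map_comp, (hk₀ (k + k₀) (by lia)).eq_zero_of_tgt ((homologyFunctor C n).map _),
        zero_comp]
      exact comp_zero.symm⟩
  have := (isUnit_iff_isIso _).1 hs.isUnit_one_sub
  rwa [Functor.map_sub, (homologyFunctor C n).map_id]

include hX in
-- `X.obj 0 ⟶ X.obj k` is in `P.trW` for all `k`, so `1 - sequenceShift` is invertible modulo `P` on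
-- the constant sequence as well as on `X`.
lemma prop_of_sequence (P : ObjectProperty (DerivedCategory C)) [P.IsTriangulated]
    [P.IsClosedUnderIsomorphisms] [P.IsClosedUnderColimitsOfShape (Discrete ℕ)]
    (hP : ∀ k : ℕ, P.trW (X.map (homOfLE k.le_succ))) : P (X.obj 0) := by
  let X₀ : ℕ ⥤ DerivedCategory C := (Functor.const ℕ).obj (X.obj 0)
  let u : X₀ ⟶ X :=
    { app k := X.map (homOfLE k.zero_le)
      naturality _ _ f := (Category.id_comp _).trans (X.map_comp (homOfLE (Nat.zero_le _)) f) }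
  have hu : P.trW (Limits.Sigma.map u.app) :=
    trW_sigmaMap P _ (map_homOfLE_zero_le_mem P.trW hP)
  have comm : (𝟙 _ - sequenceShift X₀) ≫ Limits.Sigma.map u.app =
      Limits.Sigma.map u.app ≫ (𝟙 _ - sequenceShift X) := by
    simp [Preadditive.sub_comp, Preadditive.comp_sub, sequenceShift_naturality]
  have := isIso_id_sub_sequenceShift hX
  exact prop_of_trW_id_sub_sequenceShift P <| trW_of_comp P hu <|
    comm ▸ P.trW.comp_mem _ _ hu (P.trW.of_isIso (𝟙 _ - sequenceShift X))

end Telescope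

section ExactFunctor

open DerivedCategory

lemma prop_Q_obj_sigma {A : Type*} [Category* A] {B : Type*} [Category* B] [Abelian B]
    [HasDerivedCategory.{w'} B] (F : A ⥤ CochainComplex B ℤ) {J : Type*}
    [HasCoproductsOfShape J A] [HasCoproductsOfShape J B] [HasExactColimitsOfShape (Discrete J) B]
    [PreservesColimitsOfShape (Discrete J) F] {P : ObjectProperty (DerivedCategory B)}
    [P.IsClosedUnderIsomorphisms] [P.IsClosedUnderColimitsOfShape (Discrete J)] {X : J → A}
    (hX : ∀ j, P (Q.obj (F.obj (X j)))) : P (Q.obj (F.obj (∐ X))) :=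
  P.prop_of_iso (PreservesCoproduct.iso (F ⋙ Q) X).symm (P.prop_colimit _ fun j ↦ hX j.as)

lemma isClosedUnderColimitsOfShape_discrete_nat {C : Type*} [Category* C] (P : ObjectProperty C)
    [∀ J : Type v, P.IsClosedUnderColimitsOfShape (Discrete J)] :
    P.IsClosedUnderColimitsOfShape (Discrete ℕ) :=
  .of_equivalence (Discrete.equivalence (Equiv.ulift.{v} (α := ℕ)))

variable {A : Type*} [Category.{v} A] [Abelian A] {B : Type*} [Category* B] [Abelian B]
  [HasDerivedCategory.{w'} B] (F : A ⥤ CochainComplex B ℤ) [F.PreservesZeroMorphisms]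
  [PreservesFiniteLimits F] [PreservesFiniteColimits F]

lemma exists_trW_shift_one_of_epi (P : ObjectProperty (DerivedCategory B))
    [P.IsStableUnderShift ℤ] {X Y : A} (f : X ⟶ Y) [Epi f] (hX : P (Q.obj (F.obj X))) :
    ∃ (K : A) (d : Q.obj (F.obj Y) ⟶ (Q.obj (F.obj K))⟦(1 : ℤ)⟧), P.trW d := by
  have hS : (ShortComplex.mk _ _ (kernel.condition f)).ShortExact :=
    { exact := ShortComplex.exact_kernel f }
  exact ⟨_, _, .mk' P (rot_of_distTriang _ (triangleOfSES_distinguished (hS.map_of_exact F))) hX⟩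

variable [HasCoproducts.{v} A] [HasCoproducts.{v} B] [AB4OfSize.{v} B]
  [∀ J : Type v, PreservesColimitsOfShape (Discrete J) F]

-- Dimension shifting: `Q (F Y)` is the start of a sequence `Q (F Yₖ)⟦k⟧`, with `Yₖ₊₁` the kernel of
-- a cover of `Yₖ` by copies of `G`. Its transition maps have cones in `P`, and it is eventually
-- acyclic in each degree.
lemma prop_Q_obj_of_isSeparator {P : ObjectProperty (DerivedCategory B)} [P.IsTriangulated]
    [P.IsClosedUnderIsomorphisms] [∀ J : Type v, P.IsClosedUnderColimitsOfShape (Discrete J)]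
    (n : ℤ) [∀ Y, (F.obj Y).IsLE n] {G : A} (hG : IsSeparator G) (h : P (Q.obj (F.obj G)))
    (Y : A) : P (Q.obj (F.obj Y)) := by
  have hstep (Y : A) :
      ∃ (K : A) (d : Q.obj (F.obj Y) ⟶ (Q.obj (F.obj K))⟦(1 : ℤ)⟧), P.trW d :=
    have := (isSeparator_iff_epi G).1 hG Y
    exists_trW_shift_one_of_epi F P (Limits.Sigma.desc fun f : G ⟶ Y ↦ f)
      (prop_Q_obj_sigma F fun _ ↦ h)
  choose K d hd using hstep
  let X (k : ℕ) : DerivedCategory B := (Q.obj (F.obj (K^[k] Y)))⟦(k : ℤ)⟧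
  have hX (k : ℕ) : ∃ f : X k ⟶ X (k + 1), P.trW f := by
    let e : (Q.obj (F.obj (K (K^[k] Y))))⟦(1 : ℤ)⟧⟦(k : ℤ)⟧ ≅ X (k + 1) :=
      (shiftFunctorAdd' _ (1 : ℤ) k (k + 1 : ℕ) (by lia)).symm.app _ ≪≫
        eqToIso (by rw [← Function.iterate_succ_apply' K])
    exact ⟨(d (K^[k] Y))⟦(k : ℤ)⟧' ≫ e.hom, P.trW.comp_mem _ _ ((hd _).shift _) (P.trW.of_isIso _)⟩
  choose f hf using hX
  have isZero_X (i : ℤ) :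
      ∃ k₀, ∀ k ≥ k₀, IsZero ((homologyFunctor B i).obj ((Functor.ofSequence f).obj k)) := by
    refine ⟨(n + 1 - i).toNat, fun k hk ↦ ?_⟩
    have : (X k).IsLE (n - k) := TStructure.t.isLE_shift _ n k _
    exact (X k).isZero_of_isLE (n - k) i (by lia)
  have := isClosedUnderColimitsOfShape_discrete_nat P
  have : HasCoproducts.{0} B := has_smallest_coproducts_of_hasCoproducts
  exact P.prop_of_iso ((shiftFunctorZero _ ℤ).app _) <| prop_of_sequence isZero_X P fun k ↦ by
    rw [Functor.ofSequence_map_homOfLE_succ]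
    exact hf k

end ExactFunctor

section TensorComplex

open MonoidalCategory

variable {C : Type*} [Category* C] [Preadditive C] [MonoidalCategory C] [MonoidalPreadditive C]
  {ι : Type*} {c : ComplexShape ι}

/-- The functor `N ↦ K ⊗ N`, tensoring a complex `K` termwise with an object. -/
def tensorLeftComplex (K : HomologicalComplex C c) : C ⥤ HomologicalComplex C c where
  obj N := ((tensorRight N).mapHomologicalComplex c).obj K
  map f := (NatTrans.mapHomologicalComplex ((tensoringRight C).map f) c).app K

instance preservesZeroMorphisms_tensorLeftComplex (K : HomologicalComplex C c) :
    (tensorLeftComplex K).PreservesZeroMorphisms where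
  map_zero _ _ := by
    ext1
    exact MonoidalPreadditive.whiskerLeft_zero

instance preservesLimitsOfShape_tensorLeftComplex (K : HomologicalComplex C c) (J : Type*)
    [Category* J] [∀ i, PreservesLimitsOfShape J (tensorLeft (K.X i))] :
    PreservesLimitsOfShape J (tensorLeftComplex K) :=
  HomologicalComplex.preservesLimitsOfShape_of_eval _ fun i ↦
    inferInstanceAs (PreservesLimitsOfShape J (tensorLeft (K.X i)))

instance preservesColimitsOfShape_tensorLeftComplex (K : HomologicalComplex C c) (J : Type*)
    [Category* J] [∀ i, PreservesColimitsOfShape J (tensorLeft (K.X i))] :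
    PreservesColimitsOfShape J (tensorLeftComplex K) :=
  HomologicalComplex.preservesColimitsOfShape_of_eval _ fun i ↦
    inferInstanceAs (PreservesColimitsOfShape J (tensorLeft (K.X i)))

/-- The unitor `K ⊗ 𝟙_ C ≅ K`. -/
def tensorLeftComplexUnit (K : HomologicalComplex C c) : (tensorLeftComplex K).obj (𝟙_ C) ≅ K :=
  (NatIso.mapHomologicalComplex (rightUnitorNatIso C) c).app K

variable [HasZeroObject C] [DecidableEq ι] {i : ι} {A : C} [MonObj A]
  {K : HomologicalComplex C c} (p : (HomologicalComplex.single C c i).obj (𝟙_ C) ⟶ K)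
  (φ : K ⟶ (HomologicalComplex.single C c i).obj A)

/-- If `K` maps to `A[-i]` with a section over the unit of the monoid object `A`, then `A[-i]` is a
retract of `K ⊗ A`. -/
noncomputable def retractSingleTensorRight
    (h : p ≫ φ = (HomologicalComplex.single C c i).map MonObj.one) :
    Retract ((HomologicalComplex.single C c i).obj A)
      (((tensorRight A).mapHomologicalComplex c).obj K) :=
  let e (X : C) : ((tensorRight A).mapHomologicalComplex c).obj
      ((HomologicalComplex.single C c i).obj X) ≅ (HomologicalComplex.single C c i).obj (X ⊗ A) :=
    (HomologicalComplex.singleMapHomologicalComplex (tensorRight A) c i).app X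
  { i := (HomologicalComplex.single C c i).map (λ_ A).inv ≫ (e (𝟙_ C)).inv ≫
      ((tensorRight A).mapHomologicalComplex c).map p
    r := ((tensorRight A).mapHomologicalComplex c).map φ ≫ (e A).hom ≫
      (HomologicalComplex.single C c i).map MonObj.mul
    retract := by
      have map_comp_hom : ((tensorRight A).mapHomologicalComplex c).map p ≫
          ((tensorRight A).mapHomologicalComplex c).map φ ≫ (e A).hom =
          (e (𝟙_ C)).hom ≫ (HomologicalComplex.single C c i).map (MonObj.one ▷ A) := by
        rw [← Functor.map_comp_assoc, h]
        exact (HomologicalComplex.singleMapHomologicalComplex (tensorRight A) c i).hom.naturality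
          MonObj.one
      simp only [Category.assoc, reassoc_of% map_comp_hom, Iso.inv_hom_id_assoc]
      rw [← Functor.map_comp, ← Functor.map_comp, MonObj.one_mul, Iso.inv_hom_id,
        (HomologicalComplex.single C c i).map_id] }

end TensorComplex

section ModuleTensor

open MonoidalCategory DerivedCategory

lemma exists_single_hom_comp_eq_map {C : Type*} [Category* C] [HasZeroMorphisms C] [HasZeroObject C]
    {K : CochainComplex C ℤ} {n : ℤ} [K.IsStrictlyLE n] {X Y : C} [Projective X] (f : X ⟶ Y)
    (φ : K ⟶ (HomologicalComplex.single C (.up ℤ) n).obj Y) [Epi (φ.f n)] :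
    ∃ p : (HomologicalComplex.single C (.up ℤ) n).obj X ⟶ K,
      p ≫ φ = (HomologicalComplex.single C (.up ℤ) n).map f := by
  let p₀ : X ⟶ K.X n :=
    Projective.factorThru (f ≫ (HomologicalComplex.singleObjXSelf (.up ℤ) n Y).inv) (φ.f n)
  refine ⟨HomologicalComplex.mkHomFromSingle p₀ ?_, HomologicalComplex.from_single_hom_ext ?_⟩
  · rintro k (rfl : n + 1 = k)
    exact (K.isZero_of_isStrictlyLE n (n + 1)).eq_of_tgt _ _
  · simp [p₀, HomologicalComplex.single_map_f_self]

variable {R : Type u} [CommRing R]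

lemma isSeparator_tensorUnit_moduleCat : IsSeparator (𝟙_ (ModuleCat.{u} R)) := fun X Y f g h ↦ by
  ext x
  have hx := h _ ((ObjectProperty.singleton_iff _ _).2 rfl)
    (ModuleCat.ofHom (LinearMap.toSpanSingleton R X x))
  have : f (LinearMap.toSpanSingleton R X x 1) = g (LinearMap.toSpanSingleton R X x 1) :=
    congr($hx (1 : R))
  rwa [LinearMap.toSpanSingleton_apply, one_smul] at this

lemma projective_tensorUnit_moduleCat : Projective (𝟙_ (ModuleCat.{u} R)) :=
  (IsProjective.iff_projective (R := R) R).1 inferInstance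

variable [HasDerivedCategory.{w'} (ModuleCat.{u} R)] {K : CochainComplex (ModuleCat.{u} R) ℤ}
  [∀ j, Module.Flat R (K.X j)] {P : ObjectProperty (DerivedCategory (ModuleCat.{u} R))}
  [P.IsTriangulated] [P.IsClosedUnderIsomorphisms]
  [∀ J : Type u, P.IsClosedUnderColimitsOfShape (Discrete J)]

lemma prop_Q_obj_tensorRight (n : ℤ) [K.IsStrictlyLE n] (hK : P (Q.obj K)) (M : ModuleCat.{u} R) :
    P (Q.obj (((tensorRight M).mapHomologicalComplex _).obj K)) := by
  have (N : ModuleCat.{u} R) : CochainComplex.IsLE ((tensorLeftComplex K).obj N) n :=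
    inferInstanceAs (CochainComplex.IsLE (((tensorRight N).mapHomologicalComplex _).obj K) n)
  have : PreservesFiniteLimits (tensorLeftComplex K) := ⟨fun _ _ _ ↦ inferInstance⟩
  have : PreservesFiniteColimits (tensorLeftComplex K) := ⟨fun _ _ _ ↦ inferInstance⟩
  exact prop_Q_obj_of_isSeparator (tensorLeftComplex K) n isSeparator_tensorUnit_moduleCat
    (P.prop_of_iso (Q.mapIso (tensorLeftComplexUnit K).symm) hK) M

lemma prop_Q_obj_single_of_epi (n : ℤ) [K.IsStrictlyLE n] (hK : P (Q.obj K)) {A : Type u}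
    [Ring A] [Algebra R A] (φ : K ⟶ (HomologicalComplex.single _ (.up ℤ) n).obj (ModuleCat.of R A))
    [Epi (φ.f n)] :
    P (Q.obj ((HomologicalComplex.single _ (.up ℤ) n).obj (ModuleCat.of R A))) := by
  let : MonObj (ModuleCat.of R A) :=
    ModuleCat.MonModuleEquivalenceAlgebra.inverseObj (AlgCat.of R A)
  have := projective_tensorUnit_moduleCat (R := R)
  obtain ⟨p, hp⟩ := exists_single_hom_comp_eq_map (MonObj.one (X := ModuleCat.of R A)) φ
  have := isClosedUnderColimitsOfShape_discrete_nat P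
  have := isStableUnderRetracts_of_isTriangulated P
  exact P.prop_of_retract ((retractSingleTensorRight p φ hp).map Q)
    (prop_Q_obj_tensorRight n hK (ModuleCat.of R A))

end ModuleTensor

section ProjectiveReplacement

open Opposite CochainComplex

variable {C : Type u} [Category.{v} C] [Abelian C] {K L : CochainComplex C ℤ}

lemma quasiIso_of_quasiIso_op (f : K ⟶ L) (hf : QuasiIso ((opEquivalence C).functor.map f.op)) :
    QuasiIso f := by
  rw [← HomologicalComplex.quasiIso_opFunctor_map_iff, quasiIso_iff]
  intro n
  obtain ⟨m, rfl⟩ : ∃ m, n = -m := ⟨-n, by simp⟩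
  rw [quasiIsoAt_iff' _ (-(m - 1)) (-m) (-(m + 1)) (ComplexShape.prev_eq' _ (by simp; lia))
    (ComplexShape.next_eq' _ (by simp))]
  exact (quasiIsoAt_iff' _ (m - 1) m (m + 1) (by simp) (by simp)).1 (hf.quasiIsoAt m)

variable [EnoughProjectives C] (K)

lemma exists_quasiIso_projective_of_isStrictlyLE (n : ℤ) [K.IsStrictlyLE n] :
    ∃ (P : CochainComplex C ℤ) (f : P ⟶ K),
      QuasiIso f ∧ (∀ j, Projective (P.X j)) ∧ P.IsStrictlyLE n := by
  let e := opEquivalence C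
  have : (e.functor.obj (op K)).IsStrictlyGE (-n) := by
    rw [isStrictlyGE_iff]
    exact fun i hi ↦ (K.isZero_of_isStrictlyLE n (-i) (by lia)).op
  obtain ⟨I, φ, _, _, _⟩ :=
    Plus.modelCategoryQuillen.exists_quasiIso_injective (e.functor.obj (op K)) (-n)
  let ψ : op K ⟶ e.inverse.obj I := e.unit.app _ ≫ e.inverse.map φ
  have hψ : e.functor.map ψ = φ ≫ e.counitInv.app I := by simp [ψ]
  refine ⟨(e.inverse.obj I).unop, ψ.unop, quasiIso_of_quasiIso_op _ ?_, fun j ↦ ?_, ?_⟩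
  · rw [Quiver.Hom.op_unop, hψ]
    infer_instance
  · exact inferInstanceAs (Projective (I.X (-j)).unop)
  · rw [isStrictlyLE_iff]
    exact fun i hi ↦ (I.isZero_of_isStrictlyGE (-n) (-i) (by lia)).unop

lemma exists_quasiIso_projective_of_isLE (n : ℤ) [K.IsLE n] :
    ∃ (P : CochainComplex C ℤ) (f : P ⟶ K),
      QuasiIso f ∧ (∀ j, Projective (P.X j)) ∧ P.IsStrictlyLE n := by
  obtain ⟨P, f, _, hP, hP'⟩ := exists_quasiIso_projective_of_isStrictlyLE (K.truncLE n) n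
  exact ⟨P, f ≫ K.ιTruncLE n, inferInstance, hP, hP'⟩

end ProjectiveReplacement

section HomologyOfKernel

open HomologicalComplex

variable {C : Type*} [Category* C] [Abelian C]

lemma shortExact_homology_of_epi {S : ShortComplex (CochainComplex C ℤ)} (hS : S.ShortExact)
    (hg : ∀ i, Epi (homologyMap S.g i)) (i : ℤ) :
    (S.map (homologyFunctor C (.up ℤ) i)).ShortExact where
  exact := hS.homology_exact₂ i
  mono_f := by
    refine (hS.homology_exact₁ (i - 1) i (by simp)).mono_g ?_
    have := hg (i - 1)
    exact zero_of_epi_comp (homologyMap S.g (i - 1)) (hS.comp_δ (i - 1) i (by simp))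
  epi_g := hg i

variable {ι : Type*} [DecidableEq ι] {c : ComplexShape ι} {K : HomologicalComplex C c} {i : ι}
  {A : C}

lemma epi_homologyMap_to_single (φ : K ⟶ (single C c i).obj A) [Epi (homologyMap φ i)] (j : ι) :
    Epi (homologyMap φ j) := by
  obtain rfl | hj := eq_or_ne j i
  · infer_instance
  · exact (isZero_single_obj_homology c i A j hj).epi _

lemma epi_f_to_single_of_epi_homologyMap (φ : K ⟶ (single C c i).obj A) [Epi (homologyMap φ i)] :
    Epi (φ.f i) := by
  have := ((single C c i).obj A).isIso_homologyι i _ rfl (by simp)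
  have := ((single C c i).obj A).isIso_pOpcycles _ i rfl (by simp)
  have : Epi (K.homologyι i ≫ opcyclesMap φ i) := by
    rw [← homologyι_naturality]
    infer_instance
  have : Epi (opcyclesMap φ i) := epi_of_epi (K.homologyι i) _
  have : Epi (φ.f i ≫ ((single C c i).obj A).pOpcycles i) := by
    rw [← p_opcyclesMap]
    infer_instance
  exact (epi_comp_iff_of_isIso _ _).1 this

lemma epi_to_single (φ : K ⟶ (single C c i).obj A) [Epi (φ.f i)] : Epi φ := by
  refine epi_of_epi_f φ fun j ↦ ?_
  obtain rfl | hj := eq_or_ne j i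
  · infer_instance
  · exact (isZero_single_obj_X c i A j hj).epi _

lemma exists_hom_single_homologyMap_eq {i : ℤ} (K : CochainComplex C ℤ) [K.IsStrictlyLE i]
    (π : K.homology i ⟶ A) :
    ∃ φ : K ⟶ (single C (.up ℤ) i).obj A,
      homologyMap φ i ≫ (singleObjHomologySelfIso (.up ℤ) i A).hom = π := by
  have : IsIso (K.homologyι i) := K.isIso_homologyι i (i + 1) (by simp)
    ((K.isZero_of_isStrictlyLE i (i + 1) (by lia)).eq_zero_of_tgt _)
  refine ⟨mkHomToSingle (K.pOpcycles i ≫ inv (K.homologyι i) ≫ π) (by simp), ?_⟩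
  simp [← cancel_epi (K.homologyπ i), singleObjCyclesSelfIso_hom, ← homology_π_ι_assoc]

lemma exists_shortExact_single {i : ℤ} (K : CochainComplex C ℤ) [K.IsStrictlyLE i]
    (π : K.homology i ⟶ A) [Epi π] :
    ∃ (F : CochainComplex C ℤ) (f : F ⟶ K) (φ : K ⟶ (single C (.up ℤ) i).obj A) (w : f ≫ φ = 0),
      (ShortComplex.mk f φ w).ShortExact ∧ Epi (φ.f i) ∧
      (∀ j, j ≠ i → IsIso (homologyMap f j)) ∧
      ∃ w' : homologyMap f i ≫ π = 0, (ShortComplex.mk (homologyMap f i) π w').ShortExact := by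
  obtain ⟨φ, hφ⟩ := exists_hom_single_homologyMap_eq K π
  have : Epi (homologyMap φ i) :=
    (epi_comp_iff_of_isIso _ (singleObjHomologySelfIso (.up ℤ) i A).hom).1 (by rwa [hφ])
  have := epi_f_to_single_of_epi_homologyMap φ
  have := epi_to_single φ
  have hS : (ShortComplex.mk (kernel.ι φ) φ (by simp)).ShortExact :=
    { exact := ShortComplex.exact_kernel φ }
  have hH := shortExact_homology_of_epi hS (epi_homologyMap_to_single φ)
  refine ⟨_, _, φ, _, hS, inferInstance, fun j hj ↦ ?_, ?_, ?_⟩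
  · exact (hH j).isIso_f_iff.2 (isZero_single_obj_homology _ i A j hj)
  · rw [← hφ, ← homologyMap_comp_assoc, kernel.condition, homologyMap_zero, zero_comp]
  · refine ShortComplex.shortExact_of_iso ?_ (hH i)
    exact ShortComplex.isoMk (Iso.refl _) (Iso.refl _) (singleObjHomologySelfIso (.up ℤ) i A)
      ((Category.id_comp _).trans (Category.comp_id _).symm) ((Category.id_comp _).trans hφ.symm)

end HomologyOfKernel

section Generators

variable {R : Type*} [CommRing R] {M : Type*} [AddCommGroup M] [Module R M]

lemma exists_ker_eq_span_of_span_insert_eq_top {s : Set M} {x : M}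
    (h : Submodule.span R (insert x s) = ⊤) :
    ∃ (J : Ideal R) (π : M →ₗ[R] R ⧸ J),
      Function.Surjective π ∧ LinearMap.ker π = Submodule.span R s := by
  let N := Submodule.span R s
  let q := LinearMap.toSpanSingleton R (M ⧸ N) (N.mkQ x)
  have hq : Function.Surjective q := by
    rwa [← LinearMap.range_eq_top, LinearMap.range_toSpanSingleton, ← Set.image_singleton,
      ← Submodule.map_span, Submodule.map_mkQ_eq_top, sup_comm, ← Submodule.span_insert]
  let e := q.quotKerEquivOfSurjective hq
  exact ⟨LinearMap.ker q, e.symm.toLinearMap ∘ₗ N.mkQ, e.symm.surjective.comp N.mkQ_surjective,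
    by rw [LinearMap.ker_comp, LinearEquiv.ker, Submodule.comap_bot, Submodule.ker_mkQ]⟩

variable (R M) in
lemma exists_surjective_spanFinrank_ker_lt [Module.Finite R M] [Nontrivial M] :
    ∃ (J : Ideal R) (π : M →ₗ[R] R ⧸ J), Function.Surjective π ∧ (LinearMap.ker π).FG ∧
      (LinearMap.ker π).spanFinrank < (⊤ : Submodule R M).spanFinrank := by
  classical
  obtain ⟨s, hs, hspan⟩ :=
    (Module.Finite.fg_top (R := R) (M := M)).exists_span_finset_card_eq_spanFinrank
  obtain rfl | ⟨x, hx⟩ := s.eq_empty_or_nonempty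
  · simp at hspan
  obtain ⟨J, π, hπ, hker⟩ := exists_ker_eq_span_of_span_insert_eq_top (R := R)
    (s := (s.erase x : Finset M)) (x := x) (by
      rwa [← Finset.coe_insert, Finset.insert_erase hx])
  refine ⟨J, π, hπ, ?_, ?_⟩
  · exact hker ▸ Submodule.fg_span (s.erase x).finite_toSet
  · rw [hker, ← hs, ← Finset.card_erase_add_one hx, Nat.lt_succ_iff, ← Set.ncard_coe_finset]
    exact Submodule.spanFinrank_span_le_ncard_of_finite (s.erase x).finite_toSet

end Generators

section Localizing

variable {T : Type u} [Category.{v} T] [Preadditive T] [HasZeroObject T]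
  [HasShift T ℤ] [∀ n : ℤ, (shiftFunctor T n).Additive] [Pretriangulated T]

lemma isLocalizingSub_Loc (S : Set T) : IsLocalizingSub.{w} (Loc.{w} S) where
  zero_mem _ hL := hL.1.zero_mem
  mem_of_iso e hx L hL := hL.1.mem_of_iso e (hx L hL)
  shift_mem n _ hx L hL := hL.1.shift_mem n (hx L hL)
  cone_mem Tr hTr h₁ h₂ L hL := hL.1.cone_mem Tr hTr (h₁ L hL) (h₂ L hL)
  coprod_mem f c hc h L hL := hL.1.coprod_mem f c hc fun i ↦ h i L hL

lemma subset_Loc (S : Set T) : S ⊆ Loc.{w} S := fun _ hx _ hL ↦ hL.2 hx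

lemma Loc_subset {S L : Set T} (hL : IsLocalizingSub.{w} L) (h : S ⊆ L) : Loc.{w} S ⊆ L :=
  fun _ hx ↦ hx L ⟨hL, h⟩

lemma Loc_eq_Loc_iff {S S' : Set T} :
    Loc.{w} S = Loc.{w} S' ↔ S ⊆ Loc.{w} S' ∧ S' ⊆ Loc.{w} S :=
  ⟨fun h ↦ ⟨h ▸ subset_Loc S, h ▸ subset_Loc S'⟩, fun h ↦
    (Loc_subset (isLocalizingSub_Loc S') h.1).antisymm (Loc_subset (isLocalizingSub_Loc S) h.2)⟩

lemma Loc_mono {S S' : Set T} (h : S ⊆ S') : Loc.{w} S ⊆ Loc.{w} S' :=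
  Loc_subset (isLocalizingSub_Loc S') (h.trans (subset_Loc S'))

lemma Loc_insert_congr {S S' : Set T} (h : Loc.{w} S = Loc.{w} S') (x : T) :
    Loc.{w} (insert x S) = Loc.{w} (insert x S') := by
  rw [Loc_eq_Loc_iff] at h ⊢
  simp only [Set.insert_subset_iff]
  exact ⟨⟨subset_Loc _ (Set.mem_insert x S'), h.1.trans (Loc_mono (Set.subset_insert x S'))⟩,
    subset_Loc _ (Set.mem_insert x S), h.2.trans (Loc_mono (Set.subset_insert x S))⟩

lemma Loc_singleton_eq_of_iso {X Y : T} (e : X ≅ Y) : Loc.{w} {X} = Loc.{w} {Y} := by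
  simp only [Loc_eq_Loc_iff, Set.singleton_subset_iff]
  exact ⟨(isLocalizingSub_Loc _).mem_of_iso e.symm (subset_Loc _ rfl),
    (isLocalizingSub_Loc _).mem_of_iso e (subset_Loc _ rfl)⟩

lemma Loc_singleton_eq_Loc_empty {X : T} (hX : IsZero X) : Loc.{w} {X} = Loc.{w} ∅ := by
  simp only [Loc_eq_Loc_iff, Set.singleton_subset_iff, Set.empty_subset, and_true]
  exact (isLocalizingSub_Loc ∅).mem_of_iso hX.isoZero.symm (isLocalizingSub_Loc ∅).zero_mem

/-- Membership in the localizing subcategory `Loc S`, as a property of objects. -/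
def locProperty (S : Set T) : ObjectProperty T := fun X ↦ X ∈ Loc.{w} S

variable (S : Set T)

instance isClosedUnderIsomorphisms_locProperty :
    (locProperty.{w} S).IsClosedUnderIsomorphisms where
  of_iso e h := (isLocalizingSub_Loc S).mem_of_iso e h

instance isClosedUnderColimitsOfShape_locProperty (J : Type w) :
    (locProperty.{w} S).IsClosedUnderColimitsOfShape (Discrete J) where
  colimitsOfShape_le := fun _ ⟨p, hp⟩ ↦
    (isLocalizingSub_Loc S).coprod_mem (p.diag.obj ∘ Discrete.mk) _
      ((IsColimit.precomposeInvEquiv Discrete.natIsoFunctor _).symm p.isColimit) fun j ↦ hp ⟨j⟩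

instance isTriangulated_locProperty : (locProperty.{w} S).IsTriangulated where
  exists_zero := ⟨0, isZero_zero T, (isLocalizingSub_Loc S).zero_mem⟩
  isStableUnderShiftBy n := { le_shift := fun _ h ↦ (isLocalizingSub_Loc S).shift_mem n h }
  toIsTriangulatedClosed₂ := .mk' fun Tr hTr h₁ h₃ ↦ by
    have hL := isLocalizingSub_Loc.{w} S
    refine hL.mem_of_iso ((shiftEquiv T (1 : ℤ)).unitIso.app _).symm (hL.shift_mem (-1) ?_)
    exact hL.cone_mem _ (rot_of_distTriang _ (rot_of_distTriang _ hTr)) h₃ (hL.shift_mem 1 h₁)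

end Localizing

section DirectSum

variable {R ι : Type*} [Semiring R] (M : ι → Type*) [∀ i, AddCommMonoid (M i)]
  [∀ i, Module R (M i)] [Module.Finite R (DirectSum ι M)]

variable (R) in
include R in
lemma exists_finset_subsingleton_of_finite_directSum :
    ∃ s : Finset ι, ∀ i ∉ s, Subsingleton (M i) := by
  classical
  obtain ⟨t, ht⟩ := Module.Finite.fg_top (R := R) (M := DirectSum ι M)
  refine ⟨t.biUnion DFinsupp.support, fun i hi ↦ subsingleton_of_forall_eq 0 fun x ↦ ?_⟩
  have hle : ⊤ ≤ LinearMap.ker (DirectSum.component R ι M i) := by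
    rw [← ht, Submodule.span_le]
    intro y hy
    by_contra hne
    exact hi (Finset.mem_biUnion.2 ⟨y, hy, DFinsupp.mem_support_iff.2 hne⟩)
  have hx : DirectSum.lof R ι M i x ∈ LinearMap.ker (DirectSum.component R ι M i) :=
    hle Submodule.mem_top
  rwa [LinearMap.mem_ker, DirectSum.component.lof_self] at hx

lemma finite_of_finite_directSum (i : ι) : Module.Finite R (M i) := by
  classical
  exact .of_surjective (DirectSum.component R ι M i) fun x ↦
    ⟨DirectSum.lof R ι M i x, DirectSum.component.lof_self R i x⟩

end DirectSum

section CyclicQuotients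

open DerivedCategory

variable {R : Type u} [CommRing R] [HasDerivedCategory.{w'} (ModuleCat.{u} R)]

lemma prop_Q_obj_single_iff_prop_smod (P : ObjectProperty (DerivedCategory (ModuleCat.{u} R)))
    [P.IsStableUnderShift ℤ] [P.IsClosedUnderIsomorphisms] (i : ℤ) (A : ModuleCat.{u} R) :
    P (Q.obj ((HomologicalComplex.single _ (.up ℤ) i).obj A)) ↔ P (smod R A) := by
  let e := ((singleFunctors (ModuleCat.{u} R)).shiftIso i 0 i (by simp)).app A
  exact (P.prop_shift_iff_of_isStableUnderShift _ i).symm.trans (P.prop_iff_of_iso e)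

lemma Loc_eq_Loc_pair_of_shortExact {i : ℤ} {F K : CochainComplex (ModuleCat.{u} R) ℤ}
    {f : F ⟶ K} {A : Type u} [Ring A] [Algebra R A]
    {φ : K ⟶ (HomologicalComplex.single _ (.up ℤ) i).obj (ModuleCat.of R A)}
    {w : f ≫ φ = 0} (hS : (ShortComplex.mk f φ w).ShortExact) [K.IsStrictlyLE i]
    [∀ j, Module.Flat R (K.X j)] [Epi (φ.f i)] :
    Loc.{u} {Q.obj K} = Loc.{u} {smod R (ModuleCat.of R A), Q.obj F} := by
  let P := locProperty.{u} {Q.obj K}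
  let P' := locProperty.{u} {smod R (ModuleCat.of R A), Q.obj F}
  have hT := triangleOfSES_distinguished hS
  have hA : P (Q.obj ((HomologicalComplex.single _ (.up ℤ) i).obj (ModuleCat.of R A))) :=
    prop_Q_obj_single_of_epi (P := P) i (subset_Loc _ rfl) φ
  have hA' : P' (Q.obj ((HomologicalComplex.single _ (.up ℤ) i).obj (ModuleCat.of R A))) :=
    (prop_Q_obj_single_iff_prop_smod P' i _).2 (subset_Loc _ (.inl rfl))
  simp only [Loc_eq_Loc_iff, Set.insert_subset_iff, Set.singleton_subset_iff]
  exact ⟨P'.ext_of_isTriangulatedClosed₂ _ hT (subset_Loc _ (.inr rfl)) hA',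
    (prop_Q_obj_single_iff_prop_smod P i _).1 hA,
    P.ext_of_isTriangulatedClosed₁ _ hT (subset_Loc _ rfl) hA⟩

variable (K : CochainComplex (ModuleCat.{u} R) ℤ)

lemma exists_Loc_eq_Loc_pair (i : ℤ) [K.IsLE i] [Module.Finite R (K.homology i)]
    [Nontrivial (K.homology i)] :
    ∃ (J : Ideal R) (F : CochainComplex (ModuleCat.{u} R) ℤ),
      Loc.{u} {Q.obj K} = Loc.{u} {smod R (ModuleCat.of R (R ⧸ J)), Q.obj F} ∧
      (∀ j, j ≠ i → Nonempty (F.homology j ≃ₗ[R] K.homology j)) ∧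
      Module.Finite R (F.homology i) ∧ (⊤ : Submodule R (F.homology i)).spanFinrank <
        (⊤ : Submodule R (K.homology i)).spanFinrank := by
  obtain ⟨P, q, _, _, _⟩ := exists_quasiIso_projective_of_isLE K i
  let e (j : ℤ) : P.homology j ≅ K.homology j := asIso (HomologicalComplex.homologyMap q j)
  obtain ⟨J, π, hπ, hfg, hlt⟩ := exists_surjective_spanFinrank_ker_lt R (K.homology i)
  let p : K.homology i ⟶ ModuleCat.of R (R ⧸ J) := ModuleCat.ofHom π
  have : Epi p := (ModuleCat.epi_iff_surjective _).2 hπ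
  obtain ⟨F, f, φ, w, hS, _, hf, w', hH⟩ := exists_shortExact_single P ((e i).hom ≫ p)
  refine ⟨J, F, ?_, fun j hj ↦ ?_, ?_⟩
  · rw [← Loc_singleton_eq_of_iso (asIso (Q.map q)), Loc_eq_Loc_pair_of_shortExact hS]
  · have := hf j hj
    exact ⟨(asIso (HomologicalComplex.homologyMap f j) ≪≫ e j).toLinearEquiv⟩
  · have hH' : (ShortComplex.mk (HomologicalComplex.homologyMap f i ≫ (e i).hom) p
        ((Category.assoc _ _ _).trans w')).ShortExact := by
      refine ShortComplex.shortExact_of_iso ?_ hH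
      exact ShortComplex.isoMk (Iso.refl _) (e i) (Iso.refl _)
    have hg := hH'.moduleCat_injective_f
    have hrange := (Submodule.map_top _).trans hH'.exact.moduleCat_range_eq_ker
    refine ⟨⟨Submodule.fg_of_fg_map_injective _ hg (hrange ▸ hfg)⟩, ?_⟩
    rwa [← Submodule.spanFinrank_map_eq_of_injective _ hg, hrange]

lemma isZero_Q_obj_of_acyclic {C : Type*} [Category* C] [Abelian C] [HasDerivedCategory.{w'} C]
    {K : CochainComplex C ℤ} (hK : K.Acyclic) : IsZero (Q.obj K) := by
  have : K.IsLE (-1) := (K.isLE_iff _).2 fun i _ ↦ hK i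
  have : K.IsGE 0 := (K.isGE_iff _).2 fun i _ ↦ hK i
  exact TStructure.t.isZero (Q.obj K) (-1) 0

lemma exactAt_of_subsingleton_homology {S ι : Type*} [Ring S] {c : ComplexShape ι}
    (K : HomologicalComplex (ModuleCat S) c) (j : ι) [Subsingleton (K.homology j)] :
    K.ExactAt j :=
  (K.exactAt_iff_isZero_homology j).2 (ModuleCat.isZero_of_subsingleton _)

lemma exists_Loc_eq_of_subsingleton_homology (s : Finset ℤ)
    (hs : ∀ j ∉ s, Subsingleton (K.homology j)) [∀ j, Module.Finite R (K.homology j)] :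
    ∃ t : Set (Ideal R), t.Finite ∧
      Loc.{u} {Q.obj K} = Loc.{u} ((fun J ↦ smod R (ModuleCat.of R (R ⧸ J))) '' t) := by
  induction s using Finset.induction_on_max generalizing K with
  | empty =>
    have hK : K.Acyclic := fun j ↦
      have := hs j (by simp)
      exactAt_of_subsingleton_homology K j
    refine ⟨∅, Set.finite_empty, ?_⟩
    rw [Set.image_empty, Loc_singleton_eq_Loc_empty (isZero_Q_obj_of_acyclic hK)]
  | insert i s hi ih =>
    induction hn : (⊤ : Submodule R (K.homology i)).spanFinrank
      using Nat.strong_induction_on generalizing K with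
    | h n ihn =>
    obtain hKi | hKi := subsingleton_or_nontrivial (K.homology i)
    · refine ih K fun j hj ↦ ?_
      obtain rfl | hji := eq_or_ne j i
      · exact hKi
      · exact hs j (by simp [hj, hji])
    have : K.IsLE i := (K.isLE_iff i).2 fun j hj ↦
      have := hs j (by simpa [hj.ne'] using fun hjs ↦ (hi j hjs).not_gt hj)
      exactAt_of_subsingleton_homology K j
    obtain ⟨J, F, hLoc, hF, hFi, hlt⟩ := exists_Loc_eq_Loc_pair K i
    have (j : ℤ) : Module.Finite R (F.homology j) := by
      obtain rfl | hji := eq_or_ne j i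
      · exact hFi
      · exact .equiv (hF j hji).some.symm
    obtain ⟨t, ht, hFt⟩ := ihn _ (hn ▸ hlt) F (fun j hj ↦ by
      have := hs j hj
      exact (hF j (by rintro rfl; simp at hj)).some.subsingleton) rfl
    refine ⟨insert J t, ht.insert J, ?_⟩
    rw [hLoc, Loc_insert_congr hFt, Set.image_insert_eq]

end CyclicQuotients

/-- Theorem: if `C` is a complex of `R`-modules whose total homology
`H₋(C) = ⨁ₙ Hₙ(C)` is a finitely generated `R`-module, then there are finitely
many ideals `J₁, …, Jₘ` of `R` with `Loc(C) = Loc(R/J₁, …, R/Jₘ)` in `D(R)`. -/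
theorem loc_eq_loc_finitely_many_cyclic_quotients (R : Type u) [CommRing R]
    [HasDerivedCategory.{w'} (ModuleCat.{u} R)]
    (C : CochainComplex (ModuleCat.{u} R) ℤ)
    (hC : Module.Finite R (DirectSum ℤ (fun n => ↥(C.homology n)))) :
    ∃ (m : ℕ) (J : Fin m → Ideal R),
      Loc.{u} {DerivedCategory.Q.obj C} =
        Loc.{u} {x | ∃ i : Fin m, x = smod R (ModuleCat.of R (R ⧸ J i))} := by
  have (j : ℤ) : Module.Finite R (C.homology j) :=
    finite_of_finite_directSum (fun n ↦ C.homology n) j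
  obtain ⟨s, hs⟩ := exists_finset_subsingleton_of_finite_directSum R fun n ↦ C.homology n
  obtain ⟨t, ht, hLoc⟩ := exists_Loc_eq_of_subsingleton_homology C s hs
  obtain ⟨m, J, -, rfl⟩ := ht.fin_param
  refine ⟨m, J, ?_⟩
  rw [hLoc, ← Set.range_comp]
  congr 1
  ext x
  simp [eq_comm]
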